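/- arXiv:2301.04459 — 12 statements merged into one kernel-verified Lean document; each statement's English description precedes it below -/
import Mathlib

section
/- Let G be a group in which every subgroup generated by two elements is either a free group or abelian. Let d ≥ 1 be an integer, let κ_0, κ_1, …, κ_d ∈ ℤ, and set ε := κ_d − κ_{d−1} − ⋯ − κ_1 − κ_0. Assume ε ≠ 0. If α, γ ∈ G satisfy the relation γ^d · α^{κ_d} = α^{κ_0} · γ · α^{κ_1} · γ ⋯ α^{κ_{d−1}} · γ, then α^ε = 1. -/
/-- If `b^d a^{κ_d} = a^{κ₀} b ⋯ a^{κ_{d-1}} b`, then the image of `a` in any commutative group is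
killed by the exponent `κ_d - κ_{d-1} - ⋯ - κ₀`. -/
theorem zpow_sub_sum_eq_one_of_relation {H A : Type*} [Group H] [CommGroup A] (f : H →* A)
    (d : ℕ) (κ : ℕ → ℤ) (a b : H)
    (hrel : b ^ d * a ^ κ d = ((List.range d).map (fun i => a ^ κ i * b)).prod) :
    f a ^ (κ d - ∑ i ∈ Finset.range d, κ i) = 1 := by
  have key : ∀ n : ℕ, f ((List.range n).map (fun i => a ^ κ i * b)).prod =
      f b ^ n * f a ^ (∑ i ∈ Finset.range n, κ i) := by
    intro n
    induction n with
    | zero => simp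
    | succ n ih =>
      rw [List.range_succ, List.map_append, List.prod_append, map_mul, ih,
        Finset.sum_range_succ, zpow_add, pow_succ]
      simp only [List.map_cons, List.map_nil, List.prod_cons, List.prod_nil, mul_one, map_mul,
        map_zpow]
      simp only [mul_assoc, mul_left_comm, mul_comm]
  have h := congrArg f hrel
  rw [key, map_mul, map_pow, map_zpow] at h
  rw [zpow_sub, mul_left_cancel h, mul_inv_cancel]

/-- A free group on at most one generator is commutative. -/
theorem FreeGroup.mul_comm_of_subsingleton {X : Type*} [Subsingleton X] (x y : FreeGroup X) :
    x * y = y * x := by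
  rcases isEmpty_or_nonempty X with _ | ⟨⟨t⟩⟩
  · exact Subsingleton.elim _ _
  · have := uniqueOfSubsingleton t
    apply (FreeGroup.mulEquivIntOfUnique (α := X)).injective
    rw [_root_.map_mul, _root_.map_mul, mul_comm]

/-- If a free group is generated by two elements, one of which is killed by every homomorphism
to `ℤ × ℤ`, then its basis has at most one element. -/
theorem FreeGroup.subsingleton_of_closure_pair {X : Type*} {a b : FreeGroup X}
    (hab : Subgroup.closure {a, b} = ⊤)
    (ha : ∀ f : FreeGroup X →* Multiplicative ℤ × Multiplicative ℤ, f a = 1) :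
    Subsingleton X := by
  classical
  refine ⟨fun x y => ?_⟩
  by_contra hxy
  let f : FreeGroup X →* Multiplicative ℤ × Multiplicative ℤ := FreeGroup.lift fun t =>
    (if t = x then Multiplicative.ofAdd 1 else 1, if t = y then Multiplicative.ofAdd 1 else 1)
  have hle : Subgroup.closure {a, b} ≤ (Subgroup.zpowers (f b)).comap f := by
    rw [Subgroup.closure_le]
    rintro g (rfl | rfl)
    · simp [ha f]
    · exact Subgroup.mem_zpowers (f _)
  have hmem : ∀ g, ∃ n : ℤ, f b ^ n = f g := fun g =>
    Subgroup.mem_zpowers_iff.1 (hle (hab ▸ Subgroup.mem_top g))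
  obtain ⟨m, hm⟩ := hmem (FreeGroup.of x)
  obtain ⟨n, hn⟩ := hmem (FreeGroup.of y)
  have hm₁ : m * (f b).1.toAdd = 1 := by
    simpa [f] using congrArg (fun p => p.1.toAdd) hm
  have hm₂ : m * (f b).2.toAdd = 0 := by
    simpa [f, hxy] using congrArg (fun p => p.2.toAdd) hm
  have hn₂ : n * (f b).2.toAdd = 1 := by
    simpa [f] using congrArg (fun p => p.2.toAdd) hn
  rcases mul_eq_zero.1 hm₂ with h | h
  · simp [h] at hm₁
  · simp [h] at hn₂

/-- Let `G` be a group in which every 2-generated subgroup is free or abelian.  Let `d ≥ 1`,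
`κ₀, …, κ_d ∈ ℤ` and `ε = κ_d - κ_{d-1} - ⋯ - κ₀ ≠ 0`.  If `α, γ ∈ G` satisfy
`γ^d α^{κ_d} = α^{κ₀} γ α^{κ₁} γ ⋯ α^{κ_{d-1}} γ`, then `α^ε = 1`. -/
theorem pow_eps_eq_one_of_relation {G : Type u} [Group G]
    (hG : ∀ a b : G,
      (∃ X : Type u, Nonempty (FreeGroup X ≃* Subgroup.closure ({a, b} : Set G))) ∨
      (∀ x y : Subgroup.closure ({a, b} : Set G), x * y = y * x))
    (d : ℕ) (hd : 1 ≤ d) (κ : ℕ → ℤ) (ε : ℤ)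
    (hε : ε = κ d - ∑ i ∈ Finset.range d, κ i) (hε0 : ε ≠ 0)
    (α γ : G)
    (hrel : γ ^ d * α ^ κ d = ((List.range d).map (fun i => α ^ κ i * γ)).prod) :
    α ^ ε = 1 := by
  let H := Subgroup.closure ({α, γ} : Set G)
  let a : H := ⟨α, Subgroup.subset_closure (by simp)⟩
  let b : H := ⟨γ, Subgroup.subset_closure (by simp)⟩
  have hrelH : b ^ d * a ^ κ d = ((List.range d).map (fun i => a ^ κ i * b)).prod := by
    apply H.subtype_injective
    rw [map_list_prod, List.map_map]
    exact hrel
  have hcomm : ∀ x y : H, x * y = y * x := by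
    rcases hG α γ with ⟨X, ⟨e⟩⟩ | h
    · have hHtop : Subgroup.closure {a, b} = ⊤ := by
        rw [← Subgroup.closure_closure_coe_preimage (k := ({α, γ} : Set G))]
        congr 1
        ext x
        simp [a, b, Subtype.ext_iff]
      have htop : Subgroup.closure {e.symm a, e.symm b} = ⊤ := by
        have h := congrArg (Subgroup.map e.symm.toMonoidHom) hHtop
        rw [MonoidHom.map_closure, Set.image_pair,
          Subgroup.map_top_of_surjective _ e.symm.surjective] at h
        exact h
      have hX := FreeGroup.subsingleton_of_closure_pair htop fun f => by
        have h := zpow_sub_sum_eq_one_of_relation (f.comp e.symm.toMonoidHom) d κ a b hrelH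
        rw [← hε] at h
        have h₁ := congrArg (fun p => p.1.toAdd) h
        have h₂ := congrArg (fun p => p.2.toAdd) h
        simp [hε0] at h₁ h₂
        exact Prod.ext h₁ h₂
      intro x y
      apply e.symm.injective
      rw [map_mul, map_mul, FreeGroup.mul_comm_of_subsingleton]
    · exact h
  let _ : CommGroup H := { (inferInstance : Group H) with mul_comm := hcomm }
  have h := zpow_sub_sum_eq_one_of_relation (MonoidHom.id H) d κ a b hrelH
  rw [← hε] at h
  exact congrArg Subtype.val h
end

section
/- Let n ≥ 1 and let α, γ be elements of SL_n(ℤ), the group of n×n integer matrices of determinant 1. If γ α γ^{−1} = α^κ for some integer κ > 1, then α is a torsion element, i.e., α has finite order. -/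
/-- A square matrix over an algebraically closed field whose only possible eigenvalue is `0`
is nilpotent. -/
theorem Matrix.isNilpotent_of_spectrum_subset_zero {ι K : Type*} [Fintype ι] [DecidableEq ι]
    [Field K] [IsAlgClosed K] {A : Matrix ι ι K} (hA : spectrum K A ⊆ {0}) :
    IsNilpotent A := by
  have hroots : A.charpoly.roots = Multiset.replicate A.charpoly.roots.card 0 :=
    Multiset.eq_replicate_card.2 fun x hx =>
      hA (Matrix.mem_spectrum_iff_isRoot_charpoly.2 (Polynomial.isRoot_of_mem_roots hx))
  have hX : A.charpoly = Polynomial.X ^ A.charpoly.roots.card := by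
    conv_lhs =>
      rw [(IsAlgClosed.splits A.charpoly).eq_prod_roots_of_monic A.charpoly_monic, hroots]
    simp
  refine ⟨A.charpoly.roots.card, ?_⟩
  have hCH := A.aeval_self_charpoly
  rw [hX] at hCH
  simpa using hCH

/-- If a matrix over an algebraically closed field has nonzero eigenvalues, and its set of
eigenvalues agrees with that of its `k`-th power, then it has a unipotent positive power. -/
theorem Matrix.exists_isNilpotent_pow_sub_one {ι K : Type*} [Fintype ι] [DecidableEq ι]
    [Field K] [IsAlgClosed K] {A : Matrix ι ι K} (hA : IsUnit A) {k : ℕ} (hk : 1 < k)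
    (hspec : spectrum K (A ^ k) = spectrum K A) :
    ∃ m, 0 < m ∧ IsNilpotent (A ^ m - 1) := by
  have himage : (· ^ k) '' spectrum K A = spectrum K A := by
    rw [← spectrum.map_pow_of_pos A (by lia), hspec]
  have hfin : (spectrum K A).Finite := Matrix.finite_spectrum A
  have hmaps : Set.MapsTo (· ^ k) (spectrum K A) (spectrum K A) :=
    Set.mapsTo_iff_image_subset.2 himage.subset
  have hbij : Set.BijOn (· ^ k) (spectrum K A) (spectrum K A) :=
    (hfin.surjOn_iff_bijOn_of_mapsTo hmaps).1 himage.superset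
  have : Finite (spectrum K A) := hfin
  obtain ⟨j, hj, hpow⟩ := isOfFinOrder_iff_pow_eq_one.1 (isOfFinOrder_of_finite hbij.equiv)
  have hiter (i : ℕ) (x : spectrum K A) : ((hbij.equiv ^ i) x : K) = (x : K) ^ k ^ i := by
    induction i with
    | zero => simp
    | succ i ih =>
      rw [pow_succ', Equiv.Perm.mul_apply, pow_succ, pow_mul, ← ih]
      rfl
  have hkj : 1 < k ^ j := Nat.one_lt_pow hj.ne' hk
  refine ⟨k ^ j - 1, by lia, isNilpotent_of_spectrum_subset_zero ?_⟩
  have hmap := spectrum.map_polynomial_aeval_of_degree_pos A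
    (Polynomial.X ^ (k ^ j - 1) - Polynomial.C (1 : K))
    (by rw [Polynomial.degree_X_pow_sub_C (by lia)]; exact_mod_cast (by lia))
  simp only [map_sub, map_pow, Polynomial.aeval_X, map_one] at hmap
  rw [hmap]
  rintro _ ⟨x, hx, rfl⟩
  have hx0 : x ≠ 0 := by
    rintro rfl
    exact spectrum.zero_notMem K hA hx
  have hfix : x ^ k ^ j = x := by
    rw [← hiter j ⟨x, hx⟩, hpow, Equiv.Perm.one_apply]
  have hone : x ^ (k ^ j - 1) = 1 := by
    apply mul_right_cancel₀ hx0
    rw [← pow_succ, Nat.sub_add_cancel hkj.le, hfix, one_mul]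
  simp [hone]

/-- An integer matrix that is conjugate to a proper integer multiple of itself vanishes. -/
theorem Matrix.eq_zero_of_conj_eq_smul {ι : Type*} [Fintype ι] [DecidableEq ι]
    {M : Matrix ι ι ℤ} (c : (Matrix ι ι ℤ)ˣ) {k : ℕ} (hk : 1 < k)
    (h : (c : Matrix ι ι ℤ) * M * (c⁻¹ : (Matrix ι ι ℤ)ˣ) = k • M) : M = 0 := by
  have hM : M = k • ((c⁻¹ : (Matrix ι ι ℤ)ˣ) * M * (c : Matrix ι ι ℤ)) := by
    rw [← smul_mul_assoc, ← mul_smul_comm, ← h]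
    simp [mul_assoc]
  have hdvd (r : ℕ) : ∃ L : Matrix ι ι ℤ, M = k ^ r • L := by
    induction r with
    | zero => exact ⟨M, by simp⟩
    | succ r ih =>
      obtain ⟨L, hL⟩ := ih
      refine ⟨(c⁻¹ : (Matrix ι ι ℤ)ˣ) * L * (c : Matrix ι ι ℤ), ?_⟩
      conv_lhs => rw [hM, hL]
      rw [mul_smul_comm, smul_mul_assoc, smul_smul, pow_succ']
  ext i j
  by_contra hij
  obtain ⟨r, hr⟩ : FiniteMultiplicity (k : ℤ) (M i j) :=
    Int.finiteMultiplicity_iff.2 ⟨by simpa using hk.ne', hij⟩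
  obtain ⟨L, hL⟩ := hdvd (r + 1)
  exact hr ⟨L i j, by simpa using congrFun₂ hL i j⟩

/-- A unipotent integer matrix that is conjugate to a proper power of itself is trivial. -/
theorem Matrix.eq_one_of_conj_eq_pow {ι : Type*} [Fintype ι] [DecidableEq ι]
    {U : Matrix ι ι ℤ} (hU : IsNilpotent (U - 1)) (c : (Matrix ι ι ℤ)ˣ) {k : ℕ} (hk : 1 < k)
    (h : (c : Matrix ι ι ℤ) * U * (c⁻¹ : (Matrix ι ι ℤ)ˣ) = U ^ k) : U = 1 := by
  by_contra hne
  set N := U - 1 with hN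
  have hN0 : N ≠ 0 := sub_ne_zero.2 hne
  have : Nontrivial (Matrix ι ι ℤ) := ⟨N, 0, hN0⟩
  obtain ⟨d, hd⟩ : ∃ d, nilpotencyClass N = d + 1 :=
    ⟨_, (Nat.sub_add_cancel (pos_nilpotencyClass_iff.2 hU)).symm⟩
  obtain ⟨hzero, hnz⟩ := nilpotencyClass_eq_succ_iff.1 hd
  have hd0 : d ≠ 0 := by
    rintro rfl
    exact hN0 (by simpa using hzero)
  have hNU : N ^ d * U = N ^ d := by
    have : N ^ d * N = 0 := by rw [← pow_succ, hzero]
    rwa [hN, mul_sub, mul_one, sub_eq_zero, ← hN] at this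
  have hNUpow (i : ℕ) : N ^ d * U ^ i = N ^ d := by
    induction i with
    | zero => simp
    | succ i ih => rw [pow_succ, ← mul_assoc, ih, hNU]
  set G := ∑ i ∈ Finset.range k, U ^ i with hG
  have hNG : N ^ d * G = k • N ^ d := by
    simp [hG, Finset.mul_sum, hNUpow]
  have hNGpow (i : ℕ) : N ^ d * G ^ i = k ^ i • N ^ d := by
    induction i with
    | zero => simp
    | succ i ih => rw [pow_succ, ← mul_assoc, ih, smul_mul_assoc, hNG, smul_smul, pow_succ]
  have hcomm : Commute N G :=
    Commute.sum_right _ _ _ fun i _ =>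
      ((Commute.refl U).sub_left (Commute.one_left U)).pow_right i
  have hconj : (c : Matrix ι ι ℤ) * N * (c⁻¹ : (Matrix ι ι ℤ)ˣ) = N * G := by
    rw [hN, hG, mul_geom_sum, mul_sub, sub_mul, h]
    simp
  refine hnz (Matrix.eq_zero_of_conj_eq_smul c (Nat.one_lt_pow hd0 hk) ?_)
  rw [← Units.conj_pow, hconj, hcomm.mul_pow, hNGpow]

/-- If `α, γ ∈ SL_n(ℤ)` satisfy `γ α γ⁻¹ = α^κ` for some integer `κ > 1`, then `α` is a
torsion element, i.e. has finite order. -/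
theorem sl_n_torsion_of_conj_pow (n : ℕ) (hn : 1 ≤ n)
    (α γ : Matrix.SpecialLinearGroup (Fin n) ℤ) (κ : ℤ) (hκ : 1 < κ)
    (h : γ * α * γ⁻¹ = α ^ κ) :
    IsOfFinOrder α := by
  lift κ to ℕ using by lia
  have hk : 1 < κ := by exact_mod_cast hκ
  rw [zpow_natCast] at h
  let φ : Matrix.SpecialLinearGroup (Fin n) ℤ →* Matrix (Fin n) (Fin n) ℤ :=
    Matrix.SpecialLinearGroup.coeMonoidHom
  let f : Matrix (Fin n) (Fin n) ℤ →+* Matrix (Fin n) (Fin n) ℂ := (Int.castRingHom ℂ).mapMatrix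
  have hf : Function.Injective f := Matrix.map_injective Int.cast_injective
  have hspec : spectrum ℂ (f (φ α) ^ κ) = spectrum ℂ (f (φ α)) := by
    let ψ := f.toMonoidHom.comp φ
    have hψ : ψ γ * ψ α * ψ γ⁻¹ = ψ α ^ κ := by rw [← map_mul, ← map_mul, h, map_pow]
    have hconj := spectrum.units_conjugate (R := ℂ) (a := ψ α) (u := ψ.toHomUnits γ)
    rwa [← map_inv, MonoidHom.coe_toHomUnits, MonoidHom.coe_toHomUnits, hψ] at hconj
  obtain ⟨m, hm, hnil⟩ := Matrix.exists_isNilpotent_pow_sub_one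
    (((Group.isUnit α).map φ).map f) hk hspec
  rw [← map_pow, ← map_pow, ← map_one f, ← map_sub, IsNilpotent.map_iff hf] at hnil
  have hpow : φ (α ^ m) = 1 := by
    refine Matrix.eq_one_of_conj_eq_pow hnil (φ.toHomUnits γ) hk ?_
    rw [← map_inv, MonoidHom.coe_toHomUnits, MonoidHom.coe_toHomUnits, ← map_mul, ← map_mul,
      ← map_pow, ← conj_pow, h, pow_right_comm]
  exact isOfFinOrder_iff_pow_eq_one.2 ⟨m, hm, Subtype.ext hpow⟩
end

section
/- Let n ≥ 1, let M be an invertible n×n complex matrix, and suppose there exist an invertible n×n complex matrix P and an integer κ with |κ| ≥ 2 such that P M P^{−1} = M^κ. Then every eigenvalue of M is a root of unity. -/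
/-- Spectral mapping for integer powers of a unit: if `k` is in the spectrum of `a`, then `k ^ z`
is in the spectrum of `a ^ z`. -/
theorem spectrum.zpow_mem_zpow {𝕜 A : Type*} [Field 𝕜] [Ring A] [Algebra 𝕜 A] (a : Aˣ) (z : ℤ)
    {k : 𝕜} (hk : k ∈ spectrum 𝕜 (a : A)) : k ^ z ∈ spectrum 𝕜 ((a ^ z : Aˣ) : A) := by
  obtain ⟨m, rfl | rfl⟩ := z.eq_nat_or_neg
  · simpa using spectrum.pow_mem_pow (a : A) m hk
  · have hm : k ^ m ∈ spectrum 𝕜 ((a ^ m : Aˣ) : A) := by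
      simpa using spectrum.pow_mem_pow (a : A) m hk
    rw [zpow_neg, zpow_neg, zpow_natCast, zpow_natCast, ← spectrum.map_inv]
    simpa using hm

/-- A nonzero element of a finite set stable under `x ↦ x ^ κ`, where `2 ≤ |κ|`, is a root of
unity. -/
theorem exists_pow_eq_one_of_zpow_mem_finite {K : Type*} [Field K] {S : Set K} (hS : S.Finite)
    {κ : ℤ} (hκ : 2 ≤ |κ|) (hmap : ∀ x ∈ S, x ^ κ ∈ S) {x : K} (hx : x ∈ S) (hx0 : x ≠ 0) :
    ∃ m : ℕ, 0 < m ∧ x ^ m = 1 := by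
  have hmem (i : ℕ) : x ^ (κ ^ i) ∈ S := by
    induction i with
    | zero => simpa using hx
    | succ i ih => simpa only [pow_succ, zpow_mul] using hmap _ ih
  obtain ⟨i, j, hij, heq⟩ : ∃ i j : ℕ, i < j ∧ x ^ (κ ^ i) = x ^ (κ ^ j) :=
    hS.exists_lt_map_eq_of_forall_mem hmem
  have hne : κ ^ j - κ ^ i ≠ 0 := fun h0 => by
    have habs : κ.natAbs ^ j = κ.natAbs ^ i := by
      simpa only [Int.natAbs_pow] using congrArg Int.natAbs (sub_eq_zero.mp h0)
    exact hij.ne' (Nat.pow_right_injective (by rw [Int.abs_eq_natAbs] at hκ; exact_mod_cast hκ) habs)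
  have hone : x ^ (κ ^ j - κ ^ i) = 1 := by
    rw [zpow_sub₀ hx0, heq, div_self (zpow_ne_zero _ hx0)]
  refine ⟨(κ ^ j - κ ^ i).natAbs, Int.natAbs_pos.mpr hne, ?_⟩
  rcases Int.natAbs_eq (κ ^ j - κ ^ i) with hz | hz <;> rw [hz] at hone
  · exact_mod_cast hone
  · rwa [zpow_neg, inv_eq_one, zpow_natCast] at hone

/-- If `M ∈ GL_n(ℂ)` is conjugate (inside `GL_n(ℂ)`) to `M^κ` for some integer `κ` with
`|κ| ≥ 2`, then every eigenvalue of `M` is a root of unity. -/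
theorem eigenvalues_rootOfUnity_of_conj_pow (n : ℕ) (hn : 1 ≤ n)
    (M P : GL (Fin n) ℂ) (κ : ℤ) (hκ : 2 ≤ |κ|)
    (h : P * M * P⁻¹ = M ^ κ)
    (lam : ℂ) (hlam : ¬ IsUnit ((M : Matrix (Fin n) (Fin n) ℂ) - lam • 1)) :
    ∃ m : ℕ, 0 < m ∧ lam ^ m = 1 := by
  have hmem : lam ∈ spectrum ℂ (M : Matrix (Fin n) (Fin n) ℂ) := by
    rwa [spectrum.mem_iff, IsUnit.sub_iff, Algebra.algebraMap_eq_smul_one]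
  refine exists_pow_eq_one_of_zpow_mem_finite (Matrix.finite_spectrum _) hκ (fun x hx => ?_) hmem
    (spectrum.ne_zero_of_mem_of_unit hmem)
  have hpow := spectrum.zpow_mem_zpow M κ hx
  rwa [← h, Units.val_mul, Units.val_mul, spectrum.units_conjugate] at hpow
end

section
/- Let A₁ and A₂ be finite-dimensional unital ℚ-algebras with dim_ℚ A₁ = dim_ℚ A₂. Let M ⊆ A₁ be a multiplicative submonoid (containing 1) whose ℚ-linear span is all of A₁. Suppose 𝔟 : A₁ → A₂ is an injective ℚ-linear map and 𝔱 : M → A₂ is a map such that 𝔟(a·x) = 𝔱(a)·𝔟(x) for all a ∈ M and x ∈ A₁. Then there exists a ℚ-algebra isomorphism φ : A₁ → A₂ such that φ(a) = 𝔱(a) for all a ∈ M. -/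
/-- Let `A₁`, `A₂` be finite-dimensional unital `ℚ`-algebras of the same dimension, and let
`M ⊆ A₁` be a multiplicative submonoid whose `ℚ`-linear span is all of `A₁`.  If
`𝔟 : A₁ → A₂` is an injective `ℚ`-linear map and `𝔱 : M → A₂` satisfies
`𝔟(a x) = 𝔱(a) 𝔟(x)` for all `a ∈ M`, `x ∈ A₁`, then there is a `ℚ`-algebra isomorphism
`φ : A₁ ≃ A₂` with `φ(a) = 𝔱(a)` for all `a ∈ M`. -/
theorem exists_algEquiv_extending {A₁ A₂ : Type*} [Ring A₁] [Algebra ℚ A₁]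
    [Ring A₂] [Algebra ℚ A₂] [FiniteDimensional ℚ A₁] [FiniteDimensional ℚ A₂]
    (hdim : Module.finrank ℚ A₁ = Module.finrank ℚ A₂)
    (M : Submonoid A₁) (hspan : Submodule.span ℚ (M : Set A₁) = ⊤)
    (𝔟 : A₁ →ₗ[ℚ] A₂) (hinj : Function.Injective 𝔟)
    (𝔱 : M → A₂)
    (hcompat : ∀ (a : M) (x : A₁), 𝔟 ((a : A₁) * x) = 𝔱 a * 𝔟 x) :
    ∃ φ : A₁ ≃ₐ[ℚ] A₂, ∀ a : M, φ (a : A₁) = 𝔱 a := by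
  have hsurj : Function.Surjective 𝔟 :=
    (LinearMap.injective_iff_surjective_of_finrank_eq_finrank hdim).1 hinj
  obtain ⟨u, hu⟩ := hsurj 1
  have h𝔱 (a : M) : 𝔟 ((a : A₁) * u) = 𝔱 a := by rw [hcompat, hu, mul_one]
  have hmul (a x : A₁) : 𝔟 (a * u) * 𝔟 x = 𝔟 (a * x) := by
    have ha : a ∈ Submodule.span ℚ (M : Set A₁) := hspan ▸ Submodule.mem_top
    induction ha using Submodule.span_induction with
    | mem a ha => rw [h𝔱 ⟨a, ha⟩, ← hcompat ⟨a, ha⟩]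
    | zero => simp
    | add a c _ _ iha ihc => simp only [add_mul, map_add, iha, ihc]
    | smul r a _ ih => simp only [smul_mul_assoc, map_smul, ih]
  let φ : A₁ →ₐ[ℚ] A₂ := AlgHom.ofLinearMap (𝔟 ∘ₗ LinearMap.mulRight ℚ u)
    (by simp [hu]) (fun a c => by simp [hmul, mul_assoc])
  have hφ (a : A₁) : φ a = 𝔟 (a * u) := rfl
  have hφinj : Function.Injective φ := by
    intro a c hac
    rw [hφ, hφ] at hac
    apply hinj
    rw [← mul_one a, ← mul_one c, ← hmul a, ← hmul c, hac]
  have hφsurj : Function.Surjective φ :=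
    (LinearMap.injective_iff_surjective_of_finrank_eq_finrank (f := φ.toLinearMap) hdim).1 hφinj
  exact ⟨AlgEquiv.ofBijective φ ⟨hφinj, hφsurj⟩, h𝔱⟩
end

section
/- For i = 1, 2, let A_i be a unital ℚ-algebra and let M_i be a multiplicative submonoid of the unit group A_iˣ. Let ⟨M_i⟩ denote the subgroup of A_iˣ generated by M_i, and assume condition (N): for every g ∈ ⟨M_i⟩, one has g ∈ M_i if and only if the element g (viewed in A_i) is integral over ℤ. Suppose φ₁ : A₁ → A₂ and φ₂ : A₂ → A₁ are ℚ-algebra isomorphisms with φ₁(⟨M₁⟩) ⊆ ⟨M₂⟩ and φ₂(⟨M₂⟩) ⊆ ⟨M₁⟩. If condition (S) holds, namely every ℚ-algebra automorphism ψ of A₁ with ψ(M₁) ⊆ M₁ satisfies ψ(M₁) = M₁, then φ₁(M₁) = M₂ and φ₂(M₂) = M₁. -/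
/-- A ring homomorphism mapping `⟨M⟩` into `⟨N⟩` maps `M` into `N`, provided that elements of `M`
are integral over `ℤ` and `N` contains all elements of `⟨N⟩` that are integral over `ℤ`. -/
theorem Submonoid.map_units_le_of_isIntegral {A B : Type*} [Ring A] [Ring B]
    {M : Submonoid Aˣ} {N : Submonoid Bˣ} (f : A →+* B)
    (hM : ∀ g ∈ M, IsIntegral ℤ (g : A))
    (hN : ∀ g ∈ Subgroup.closure (N : Set Bˣ), IsIntegral ℤ (g : B) → g ∈ N)
    (h : Subgroup.map (Units.map (f : A →* B)) (Subgroup.closure (M : Set Aˣ)) ≤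
      Subgroup.closure (N : Set Bˣ)) :
    Submonoid.map (Units.map (f : A →* B)) M ≤ N := by
  rintro _ ⟨g, hg, rfl⟩
  exact hN _ (h ⟨g, Subgroup.subset_closure hg, rfl⟩) ((hM g hg).map f.toIntAlgHom)

/-- Let `M_i` be a submonoid of the unit group of a unital `ℚ`-algebra `A_i` satisfying
condition (N): an element of the subgroup `⟨M_i⟩` generated by `M_i` belongs to `M_i` iff it
is integral over `ℤ`.  If `φ₁ : A₁ ≃ A₂` and `φ₂ : A₂ ≃ A₁` are `ℚ`-algebra isomorphisms
with `φ₁(⟨M₁⟩) ⊆ ⟨M₂⟩` and `φ₂(⟨M₂⟩) ⊆ ⟨M₁⟩`, and condition (S) holds (every `ℚ`-algebra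
automorphism `ψ` of `A₁` with `ψ(M₁) ⊆ M₁` satisfies `ψ(M₁) = M₁`), then `φ₁(M₁) = M₂` and
`φ₂(M₂) = M₁`. -/
theorem map_submonoid_units_eq {A₁ A₂ : Type*} [Ring A₁] [Algebra ℚ A₁]
    [Ring A₂] [Algebra ℚ A₂]
    (M₁ : Submonoid A₁ˣ) (M₂ : Submonoid A₂ˣ)
    (hN₁ : ∀ g ∈ Subgroup.closure (M₁ : Set A₁ˣ), g ∈ M₁ ↔ IsIntegral ℤ ((g : A₁ˣ) : A₁))
    (hN₂ : ∀ g ∈ Subgroup.closure (M₂ : Set A₂ˣ), g ∈ M₂ ↔ IsIntegral ℤ ((g : A₂ˣ) : A₂))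
    (φ₁ : A₁ ≃ₐ[ℚ] A₂) (φ₂ : A₂ ≃ₐ[ℚ] A₁)
    (h₁ : Subgroup.map (Units.map (φ₁ : A₁ →* A₂)) (Subgroup.closure (M₁ : Set A₁ˣ)) ≤
      Subgroup.closure (M₂ : Set A₂ˣ))
    (h₂ : Subgroup.map (Units.map (φ₂ : A₂ →* A₁)) (Subgroup.closure (M₂ : Set A₂ˣ)) ≤
      Subgroup.closure (M₁ : Set A₁ˣ))
    (hS : ∀ ψ : A₁ ≃ₐ[ℚ] A₁,
      Submonoid.map (Units.map (ψ : A₁ →* A₁)) M₁ ≤ M₁ →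
      Submonoid.map (Units.map (ψ : A₁ →* A₁)) M₁ = M₁) :
    Submonoid.map (Units.map (φ₁ : A₁ →* A₂)) M₁ = M₂ ∧
      Submonoid.map (Units.map (φ₂ : A₂ →* A₁)) M₂ = M₁ := by
  have le₁ : Submonoid.map (Units.map (φ₁ : A₁ →* A₂)) M₁ ≤ M₂ :=
    Submonoid.map_units_le_of_isIntegral (φ₁ : A₁ →+* A₂)
      (fun g hg => (hN₁ g (Subgroup.subset_closure hg)).1 hg) (fun g hg => (hN₂ g hg).2) h₁
  have le₂ : Submonoid.map (Units.map (φ₂ : A₂ →* A₁)) M₂ ≤ M₁ :=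
    Submonoid.map_units_le_of_isIntegral (φ₂ : A₂ →+* A₁)
      (fun g hg => (hN₂ g (Subgroup.subset_closure hg)).1 hg) (fun g hg => (hN₁ g hg).2) h₂
  have map_trans : Submonoid.map (Units.map ((φ₁.trans φ₂ : A₁ ≃ₐ[ℚ] A₁) : A₁ →* A₁)) M₁ =
      Submonoid.map (Units.map (φ₂ : A₂ →* A₁))
        (Submonoid.map (Units.map (φ₁ : A₁ →* A₂)) M₁) := by
    rw [Submonoid.map_map]
    rfl
  have map_map_eq := hS (φ₁.trans φ₂) (map_trans ▸ (Submonoid.monotone_map le₁).trans le₂)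
  rw [map_trans] at map_map_eq
  have map_eq : Submonoid.map (Units.map (φ₂ : A₂ →* A₁)) M₂ = M₁ :=
    le_antisymm le₂ (map_map_eq.ge.trans (Submonoid.monotone_map le₁))
  have inj : Function.Injective (Units.map (φ₂ : A₂ →* A₁)) :=
    Units.map_injective φ₂.injective
  exact ⟨Submonoid.map_injective_of_injective inj (map_map_eq.trans map_eq.symm), map_eq⟩
end

section
/- Let A be a commutative finite-dimensional unital ℚ-algebra, and let a_1, …, a_k be units of A. For a ∈ A let m_a : A → A denote the ℚ-linear map of multiplication by a, and suppose that for each i, d_i := det(m_{a_i}) is a (nonzero) integer. Assume that for every i there exists a prime number p such that p divides d_i but p does not divide d_j for all j ≠ i. If ψ is a ℚ-algebra automorphism of A that maps the multiplicative submonoid of A generated by {a_1, …, a_k} into itself, then ψ(a_i) = a_i for every i. -/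
/-- Let `A` be a commutative finite-dimensional unital `ℚ`-algebra and `a₁, …, a_k ∈ Aˣ`
units whose multiplication maps have integer determinants `d_i`, such that each `d_i` is
divisible by a prime not dividing any other `d_j`.  Then every `ℚ`-algebra automorphism of
`A` mapping the submonoid generated by the `a_i` into itself fixes each `a_i`. -/
theorem algAut_fixes_generators {A : Type*} [CommRing A] [Algebra ℚ A]
    [FiniteDimensional ℚ A] {k : ℕ} (a : Fin k → Aˣ) (d : Fin k → ℤ)
    (hd : ∀ i, (d i : ℚ) = LinearMap.det (LinearMap.mulLeft ℚ ((a i : A))))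
    (hp : ∀ i, ∃ p : ℕ, p.Prime ∧ (p : ℤ) ∣ d i ∧ ∀ j, j ≠ i → ¬ (p : ℤ) ∣ d j)
    (ψ : A ≃ₐ[ℚ] A)
    (hψ : ∀ x ∈ Submonoid.closure (Set.range (fun i => ((a i : A)))),
      ψ x ∈ Submonoid.closure (Set.range (fun i => ((a i : A))))) :
    ∀ i, ψ (a i : A) = (a i : A) := by
  have hd' : ∀ i, (d i : ℚ) = Algebra.norm ℚ (a i : A) := fun i => hd i
  intro i
  obtain ⟨n, hn⟩ := Submonoid.exists_of_mem_closure_range _ _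
    (hψ _ (Submonoid.subset_closure ⟨i, rfl⟩))
  have hprod : d i = ∏ j, d j ^ n j := by
    have h := congrArg (Algebra.norm ℚ) hn
    rw [Algebra.norm_eq_of_algEquiv, map_prod] at h
    simp only [map_pow, ← hd'] at h
    exact_mod_cast h
  have hn0 : ∀ j, j ≠ i → n j = 0 := by
    intro j hj
    by_contra hnj
    obtain ⟨p, -, hpj, hpne⟩ := hp j
    apply hpne i hj.symm
    rw [hprod]
    exact (hpj.trans (dvd_pow_self _ hnj)).trans
      (Finset.dvd_prod_of_mem (fun j => d j ^ n j) (Finset.mem_univ j))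
  have hpow : d i = d i ^ n i := by
    rwa [Fintype.prod_eq_single i fun j hj => by rw [hn0 j hj, pow_zero]] at hprod
  have hni : n i = 1 := by
    have hne : d i ≠ 0 := by
      intro h
      have hu := (a i).isUnit.map (Algebra.norm ℚ)
      rw [← hd', h] at hu
      simp at hu
    obtain ⟨p, hpp, hpi, -⟩ := hp i
    have hlt : 1 < (d i).natAbs := hpp.one_lt.trans_le <|
      Nat.le_of_dvd (Int.natAbs_pos.2 hne) (Int.natCast_dvd.1 hpi)
    refine Nat.pow_right_injective hlt ?_
    simp only [pow_one]
    rw [← Int.natAbs_pow, ← hpow]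
  rw [hn, Fintype.prod_eq_single i fun j hj => by rw [hn0 j hj, pow_zero], hni, pow_one]
end

section
/- Let A be a commutative finite-dimensional unital ℚ-algebra, and let a_1, …, a_k be units of A, each integral over ℤ. Suppose that for each i, d_i := det(m_{a_i}) is an integer, where m_a denotes multiplication by a, and that for every i there exists a prime number p such that p divides d_i but p does not divide d_j for all j ≠ i. Then for all integers n_1, …, n_k, the element a_1^{n_1} ⋯ a_k^{n_k} (powers with negative exponents taken in the unit group Aˣ) is integral over ℤ if and only if n_i ≥ 0 for all i. -/
open Polynomial in
/-- The roots of the characteristic polynomial of an integral matrix over a field are integral. -/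
theorem Matrix.isIntegral_of_isRoot_charpoly {R K ι : Type*} [CommRing R] [Field K] [Algebra R K]
    [Fintype ι] [DecidableEq ι] {M : Matrix ι ι K} (hM : IsIntegral R M) {μ : K}
    (hμ : M.charpoly.IsRoot μ) : IsIntegral R μ := by
  obtain ⟨p, hp, hpM⟩ := hM
  refine ⟨p, hp, ?_⟩
  have hmem : μ ∈ spectrum K M := Matrix.mem_spectrum_iff_isRoot_charpoly.mpr hμ
  have h := spectrum.subset_polynomial_aeval M (p.map (algebraMap R K)) ⟨μ, hmem, rfl⟩
  rw [aeval_map_algebraMap, aeval_def, hpM] at h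
  have : Nontrivial (Matrix ι ι K) := by
    by_contra hn
    rw [not_nontrivial_iff_subsingleton] at hn
    simp [spectrum.of_subsingleton] at hmem
  simpa [spectrum.zero_eq, eval_map] using h

/-- The determinant of a matrix which is integral as an element of the matrix algebra is
integral. -/
theorem Matrix.isIntegral_det_of_isIntegral {R K ι : Type*} [CommRing R] [Field K] [Algebra R K]
    [Fintype ι] [DecidableEq ι] {M : Matrix ι ι K} (hM : IsIntegral R M) :
    IsIntegral R M.det := by
  let L := AlgebraicClosure K
  have hML : IsIntegral R (M.map (algebraMap K L)) :=
    hM.map ((Algebra.ofId K L).mapMatrix.restrictScalars R)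
  rw [← isIntegral_algebraMap_iff (FaithfulSMul.algebraMap_injective K L), RingHom.map_det,
    RingHom.mapMatrix_apply, Matrix.det_eq_prod_roots_charpoly]
  exact IsIntegral.multiset_prod fun μ hμ =>
    Matrix.isIntegral_of_isRoot_charpoly hML (Polynomial.isRoot_of_mem_roots hμ)

/-- The norm of an integral element of a finite-dimensional algebra over a field is integral. -/
theorem Algebra.isIntegral_norm_of_isIntegral {R K A : Type*} [CommRing R] [Field K] [CommRing A]
    [Algebra R K] [Algebra K A] [Algebra R A] [IsScalarTower R K A] [FiniteDimensional K A]
    {x : A} (hx : IsIntegral R x) : IsIntegral R (Algebra.norm K x) := by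
  let b := Module.finBasis K A
  rw [Algebra.norm_eq_matrix_det b]
  exact Matrix.isIntegral_det_of_isIntegral
    (hx.map ((Algebra.leftMulMatrix b).restrictScalars R))

/-- If a product of integer powers of nonzero integers is an integer, then the exponent of any
factor having a prime divisor that divides no other factor is nonnegative. -/
theorem zpow_exponent_nonneg_of_prod_eq_intCast {ι : Type*} [Fintype ι] {d n : ι → ℤ}
    (hd : ∀ j, d j ≠ 0) {m : ℤ} (hm : ∏ j, (d j : ℚ) ^ n j = m) {i : ι} {p : ℕ}
    (hp : p.Prime) (hpi : (p : ℤ) ∣ d i) (hpj : ∀ j, j ≠ i → ¬ (p : ℤ) ∣ d j) :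
    0 ≤ n i := by
  have : Fact p.Prime := ⟨hp⟩
  let v : ℚ →*₀ ℚ :=
    { toFun := padicNorm p
      map_zero' := padicNorm.zero
      map_one' := padicNorm.one
      map_mul' := padicNorm.mul }
  have hother : ∀ j, j ≠ i → v ((d j : ℚ) ^ n j) = 1 := fun j hj => by
    rw [map_zpow₀, show v (d j) = 1 from (padicNorm.int_eq_one_iff _).mpr (hpj j hj), one_zpow]
  have hnorm : v (d i) ^ n i ≤ 1 := by
    rw [← map_zpow₀, ← Fintype.prod_eq_single i hother, ← map_prod, hm]
    exact padicNorm.of_int m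
  by_contra! hneg
  have hlt : v (d i) < 1 := (padicNorm.int_lt_one_iff _).mpr hpi
  have hpos : 0 < v (d i) :=
    lt_of_le_of_ne (padicNorm.nonneg _) (padicNorm.nonzero (by exact_mod_cast hd i)).symm
  exact hnorm.not_gt (one_lt_zpow_of_neg₀ hpos hlt hneg)

/-- Let `A` be a commutative finite-dimensional unital `ℚ`-algebra and `a₁, …, a_k ∈ Aˣ`
units, each integral over `ℤ`, whose multiplication maps have integer determinants `d_i`,
such that each `d_i` is divisible by a prime not dividing any other `d_j`.  Then for all
integers `n₁, …, n_k`, the element `a₁^{n₁} ⋯ a_k^{n_k}` is integral over `ℤ` iff all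
`n_i` are nonnegative. -/
theorem isIntegral_prod_zpow_iff_nonneg {A : Type*} [CommRing A] [Algebra ℚ A]
    [FiniteDimensional ℚ A] {k : ℕ} (a : Fin k → Aˣ)
    (hint : ∀ i, IsIntegral ℤ ((a i : A)))
    (d : Fin k → ℤ)
    (hd : ∀ i, (d i : ℚ) = LinearMap.det (LinearMap.mulLeft ℚ ((a i : A))))
    (hp : ∀ i, ∃ p : ℕ, p.Prime ∧ (p : ℤ) ∣ d i ∧ ∀ j, j ≠ i → ¬ (p : ℤ) ∣ d j)
    (n : Fin k → ℤ) :
    IsIntegral ℤ (((∏ i, (a i) ^ (n i) : Aˣ) : A)) ↔ ∀ i, 0 ≤ n i := by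
  have hnorm : ∀ i, Algebra.norm ℚ (a i : A) = d i := fun i => (hd i).symm
  constructor
  · intro h i
    obtain ⟨m, hm⟩ := IsIntegrallyClosed.isIntegral_iff.mp
      (Algebra.isIntegral_norm_of_isIntegral (K := ℚ) h)
    have hd0 : ∀ j, d j ≠ 0 := fun j => by
      have := ((a j).isUnit.map (Algebra.norm ℚ)).ne_zero
      rw [hnorm j] at this
      exact_mod_cast this
    obtain ⟨p, hp, hpi, hpj⟩ := hp i
    refine zpow_exponent_nonneg_of_prod_eq_intCast hd0 (m := m) ?_ hp hpi hpj
    rw [← eq_intCast (algebraMap ℤ ℚ), hm, ← Units.coe_map]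
    simp [map_prod, map_zpow, hnorm]
  · intro h
    rw [Units.coe_prod]
    refine IsIntegral.prod _ fun i _ => ?_
    lift n i to ℕ using h i with e
    simpa using (hint i).pow e
end

section
/- Let A be a commutative finite-dimensional unital ℚ-algebra, and let a_1, …, a_k be units of A. Suppose that for each i, d_i := det(m_{a_i}) is an integer, where m_a denotes multiplication by a, and that for every i there exists a prime number p such that p divides d_i but p does not divide d_j for all j ≠ i. Then a_1, …, a_k are multiplicatively independent: if a_1^{n_1} ⋯ a_k^{n_k} = 1 for integers n_1, …, n_k (powers taken in the unit group Aˣ), then n_1 = ⋯ = n_k = 0. -/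
/-- The `p`-adic valuation as a group homomorphism on the units of `ℚ`. -/
noncomputable def padicValRatUnitsHom (p : ℕ) [Fact p.Prime] : ℚˣ →* Multiplicative ℤ where
  toFun u := Multiplicative.ofAdd (padicValRat p u)
  map_one' := by simp
  map_mul' u v := by
    rw [Units.val_mul, padicValRat.mul u.ne_zero v.ne_zero, ofAdd_add]

/-- If a product of integer powers of units of `ℚ` is `1`, the corresponding integer
combination of `p`-adic valuations vanishes. -/
lemma sum_mul_padicValRat_eq_zero {ι : Type*} [Fintype ι] (p : ℕ) [Fact p.Prime]
    (u : ι → ℚˣ) (n : ι → ℤ) (h : ∏ i, u i ^ n i = 1) :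
    ∑ i, n i * padicValRat p (u i) = 0 := by
  have h' := congrArg (fun x => Multiplicative.toAdd (padicValRatUnitsHom p x)) h
  simpa [map_prod, map_zpow, toAdd_prod, padicValRatUnitsHom] using h'

/-- Let `A` be a commutative finite-dimensional unital `ℚ`-algebra and `a₁, …, a_k ∈ Aˣ`
units whose multiplication maps have integer determinants `d_i`, such that each `d_i` is
divisible by a prime not dividing any other `d_j`.  Then the `a_i` are multiplicatively
independent: `a₁^{n₁} ⋯ a_k^{n_k} = 1` implies all `n_i = 0`. -/
theorem multiplicatively_independent {A : Type*} [CommRing A] [Algebra ℚ A]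
    [FiniteDimensional ℚ A] {k : ℕ} (a : Fin k → Aˣ)
    (d : Fin k → ℤ)
    (hd : ∀ i, (d i : ℚ) = LinearMap.det (LinearMap.mulLeft ℚ ((a i : A))))
    (hp : ∀ i, ∃ p : ℕ, p.Prime ∧ (p : ℤ) ∣ d i ∧ ∀ j, j ≠ i → ¬ (p : ℤ) ∣ d j)
    (n : Fin k → ℤ)
    (h : (∏ i, (a i) ^ (n i)) = (1 : Aˣ)) :
    ∀ i, n i = 0 := by
  intro i
  obtain ⟨p, hprime, hdvd, hndvd⟩ := hp i
  have : Fact p.Prime := ⟨hprime⟩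
  let f : Aˣ →* ℚˣ := Units.map (Algebra.norm ℚ : A →* ℚ)
  have hf : ∀ j, (f (a j) : ℚ) = d j := fun j => (hd j).symm
  have hsum : ∑ j, n j * padicValRat p (f (a j)) = 0 :=
    sum_mul_padicValRat_eq_zero p (fun j => f (a j)) n (by
      simpa only [map_prod, map_zpow, map_one] using congrArg f h)
  simp only [hf, padicValRat.of_int] at hsum
  rw [Finset.sum_eq_single i (fun j _ hj => by
    simp [padicValInt.eq_zero_of_not_dvd (hndvd j hj)]) (by simp)] at hsum
  have hdi : d i ≠ 0 := fun h0 => (f (a i)).ne_zero (by rw [hf, h0, Int.cast_zero])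
  refine (mul_eq_zero.mp hsum).resolve_right fun hv => ?_
  rcases padicValInt.eq_zero_iff.mp (Int.natCast_eq_zero.mp hv) with h1 | h0 | hnot
  · exact hprime.ne_one h1
  · exact hdi h0
  · exact hnot hdvd
end

section
/- Let D be a division ring that is a finite-dimensional ℚ-algebra, and let n ≥ 1. Regard D^n as a right D-vector space on which n×n matrices over D act by left multiplication. Let Σ be a nontrivial finitely generated abelian subgroup of the group of invertible n×n matrices over D such that every α ∈ Σ is unipotent, i.e., α − 1 is a nilpotent matrix. Let 𝔨 := ⋂_{α∈Σ} ker(α − 1) ⊆ D^n, a right D-subspace, and let k := dim_D 𝔨 (its right D-dimension). Then the ℤ-rank of Σ, i.e., dim_ℚ(ℚ ⊗_ℤ Σ) where Σ is viewed as an additive abelian group, is strictly less than n·(n−k)·dim_ℚ D. -/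
open scoped TensorProduct Matrix

set_option maxHeartbeats 1000000

namespace IsNilpotent

/-- The exponential of a nilpotent element agrees with `1 + x` up to a multiple of `x ^ 2`. -/
theorem exists_exp_eq_one_add_add_sq_mul {A : Type*} [CommRing A] [Algebra ℚ A] {x : A}
    (hx : IsNilpotent x) : ∃ w : A, exp x = 1 + x + x ^ 2 * w := by
  obtain ⟨k, hk⟩ := hx
  have hk' : x ^ (k + 2) = 0 := by rw [pow_add, hk, zero_mul]
  refine ⟨∑ i ∈ Finset.range k, ((i + 2).factorial : ℚ)⁻¹ • x ^ i, ?_⟩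
  rw [exp_eq_sum hk', Finset.sum_range_succ', Finset.sum_range_succ', Finset.mul_sum]
  simp only [zero_add, Nat.factorial_one, Nat.cast_one, inv_one, pow_one, one_smul,
    Nat.factorial_zero, pow_zero, mul_smul_comm, add_assoc, one_add_one_eq_two, ← pow_add]
  rw [add_comm, add_comm x 1, add_assoc]
  simp only [add_comm 2]

/-- Every unipotent element `1 + x` is the exponential of a multiple of `x`. -/
theorem exists_dvd_exp_eq_one_add {A : Type*} [CommRing A] [Algebra ℚ A] {x : A}
    (hx : IsNilpotent x) : ∃ y : A, x ∣ y ∧ exp y = 1 + x := by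
  obtain ⟨k, hk⟩ := hx
  induction k using Nat.strong_induction_on generalizing x with
  | _ k ih =>
    have hx : IsNilpotent x := ⟨k, hk⟩
    rcases lt_or_ge k 2 with h2 | h2
    · have hx0 : x = 0 := by
        have := pow_eq_zero_of_le (show k ≤ 1 by omega) hk
        simpa using this
      exact ⟨0, by simp [hx0], by simp [hx0]⟩
    · obtain ⟨w, hw⟩ := exists_exp_eq_one_add_add_sq_mul hx.neg
      have hz : (x ^ 2 * (w * (1 + x) - 1)) ^ (k - 1) = 0 := by
        rw [mul_pow, ← pow_mul, pow_eq_zero_of_le (show k ≤ 2 * (k - 1) by omega) hk, zero_mul]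
      obtain ⟨y, ⟨c, rfl⟩, hy⟩ := ih (k - 1) (by omega) hz
      have hyn : IsNilpotent (x ^ 2 * (w * (1 + x) - 1) * c) :=
        (Commute.all _ _).isNilpotent_mul_right ⟨_, hz⟩
      refine ⟨x + x ^ 2 * (w * (1 + x) - 1) * c,
        ⟨1 + x * (w * (1 + x) - 1) * c, by ring⟩, ?_⟩
      have key : 1 + x ^ 2 * (w * (1 + x) - 1) = exp (-x) * (1 + x) := by
        rw [hw]; ring
      rw [exp_add_of_commute (Commute.all _ _) hx hyn, hy, key, ← mul_assoc,
        exp_mul_exp_neg_self hx, one_mul]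

theorem eq_zero_of_exp_eq_one {A : Type*} [CommRing A] [Algebra ℚ A] {x : A}
    (hx : IsNilpotent x) (h : exp x = 1) : x = 0 := by
  obtain ⟨w, hw⟩ := exists_exp_eq_one_add_add_sq_mul hx
  have hu : IsUnit (1 + x * w) :=
    ((Commute.all _ _).isNilpotent_mul_right hx).isUnit_one_add
  have h0 : x * (1 + x * w) = 0 := by linear_combination h - hw
  exact hu.mul_left_eq_zero.mp h0

theorem eq_of_exp_eq {A : Type*} [CommRing A] [Algebra ℚ A] {x y : A}
    (hx : IsNilpotent x) (hy : IsNilpotent y) (h : exp x = exp y) : x = y := by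
  refine sub_eq_zero.mp (eq_zero_of_exp_eq_one ((Commute.all _ _).isNilpotent_sub hx hy) ?_)
  rw [sub_eq_add_neg, exp_add_of_commute (Commute.all _ _) hx hy.neg, h, exp_mul_exp_neg_self hy]

end IsNilpotent

/-- A unipotent representation of a commutative group in a commutative `ℚ`-algebra is the
exponential of an additive map. -/
theorem exists_addMonoidHom_exp_eq {A H : Type*} [CommRing A] [Algebra ℚ A] [CommGroup H]
    (f : H →* A) (hf : ∀ h, IsNilpotent (f h - 1)) :
    ∃ g : Additive H →+ A, ∀ h : H,
      (f h - 1) ∣ g (Additive.ofMul h) ∧ IsNilpotent.exp (g (Additive.ofMul h)) = f h := by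
  choose g hdvd hexp using fun h => IsNilpotent.exists_dvd_exp_eq_one_add (hf h)
  have hnil (h : H) : IsNilpotent (g h) := by
    obtain ⟨c, hc⟩ := hdvd h
    rw [hc]
    exact (Commute.all _ _).isNilpotent_mul_right (hf h)
  have hexp' (h : H) : IsNilpotent.exp (g h) = f h := by rw [hexp]; ring
  refine ⟨AddMonoidHom.mk' (fun h => g h.toMul) fun a b => ?_, fun h => ⟨hdvd h, hexp' h⟩⟩
  refine IsNilpotent.eq_of_exp_eq (hnil _)
    ((Commute.all _ _).isNilpotent_add (hnil _) (hnil _)) ?_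
  rw [IsNilpotent.exp_add_of_commute (Commute.all _ _) (hnil _) (hnil _)]
  simp only [hexp', toMul_add, map_mul]

/-- An additive group embedding in a finite-dimensional `ℚ`-vector space has rank at most the
dimension of that space. -/
theorem finrank_rat_tensor_le_of_injective {M V : Type*} [AddCommGroup M] [AddCommGroup V]
    [Module ℚ V] [FiniteDimensional ℚ V] (g : M →+ V) (hg : Function.Injective g) :
    Module.finrank ℚ (ℚ ⊗[ℤ] M) ≤ Module.finrank ℚ V := by
  rw [(TensorProduct.isBaseChange ℤ M ℚ).finrank_eq]
  have h := LinearMap.lift_rank_le_of_injective g.toIntLinearMap hg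
  rw [← IsFractionRing.rank_right_eq ℤ ℚ V] at h
  have h' := Cardinal.toNat_le_toNat h
    (by rw [Cardinal.lift_lt_aleph0]; exact Module.rank_lt_aleph0 ℚ V)
  simpa [Module.finrank] using h'

/-- If a commutative group embeds as unipotent elements in `1 + S`, where `S` is a left ideal of a
finite-dimensional `ℚ`-algebra containing a non-nilpotent element, then its rank is less than the
dimension of `S`. -/
theorem finrank_rat_tensor_lt_of_unipotent {E H : Type*} [Ring E] [Algebra ℚ E]
    [FiniteDimensional ℚ E] [CommGroup H] (f : H →* E) (hf : Function.Injective f)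
    (hunip : ∀ h, IsNilpotent (f h - 1)) (S : Submodule E E) (hS : ∀ h, f h - 1 ∈ S)
    {p : E} (hpS : p ∈ S) (hp : ¬ IsNilpotent p) :
    Module.finrank ℚ (ℚ ⊗[ℤ] Additive H) < Module.finrank ℚ (S.restrictScalars ℚ) := by
  have hcomm : ∀ a ∈ Set.range f, ∀ b ∈ Set.range f, a * b = b * a := by
    rintro _ ⟨a, rfl⟩ _ ⟨b, rfl⟩
    rw [← map_mul, mul_comm, map_mul]
  let A := Algebra.adjoin ℚ (Set.range f)
  have hAcomm : IsMulCommutative A := Algebra.isMulCommutative_adjoin ℚ hcomm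
  let : CommRing A := { A.toRing with mul_comm := hAcomm.is_comm.comm }
  let f' : H →* A := f.codRestrict A fun h => Algebra.subset_adjoin ⟨h, rfl⟩
  have hunip' (h : H) : IsNilpotent (f' h - 1) :=
    (IsNilpotent.map_iff (f := A.val) Subtype.val_injective).mp (hunip h)
  obtain ⟨g, hg⟩ := exists_addMonoidHom_exp_eq (A := A) f' hunip'
  have hginj : Function.Injective g := by
    intro a b hab
    have h1 : f' a.toMul = f' b.toMul := by
      rw [← (hg a.toMul).2, ← (hg b.toMul).2]
      exact congrArg IsNilpotent.exp hab
    exact hf (congrArg Subtype.val h1)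
  have hgnil (a : Additive H) : IsNilpotent (g a) := by
    obtain ⟨c, hc⟩ := (hg a.toMul).1
    rw [ofMul_toMul] at hc
    rw [hc]
    exact (Commute.all _ _).isNilpotent_mul_right (hunip' _)
  let N : Submodule ℚ A := (nilradical A).restrictScalars ℚ
  let T : Submodule ℚ E := (N.map A.val.toLinearMap) ⊓ S.restrictScalars ℚ
  have hgT (a : Additive H) : (g a : E) ∈ T := by
    refine ⟨⟨g a, hgnil a, rfl⟩, ?_⟩
    obtain ⟨c, hc⟩ := (hg a.toMul).1
    rw [ofMul_toMul, mul_comm] at hc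
    rw [hc]
    exact S.smul_mem (c : E) (hS a.toMul)
  let g' : Additive H →+ T := (A.val.toAddMonoidHom.comp g).codRestrict T hgT
  have hg' : Function.Injective g' := fun a b hab =>
    hginj (Subtype.ext (congrArg (fun t : T => (t : E)) hab))
  refine (finrank_rat_tensor_le_of_injective g' hg').trans_lt
    (Submodule.finrank_lt_finrank_of_lt ?_)
  refine lt_of_le_of_ne inf_le_right fun hTS => hp ?_
  have hpT : p ∈ T := hTS ▸ hpS
  obtain ⟨⟨a, ha, rfl⟩, -⟩ := hpT
  exact IsNilpotent.map (show IsNilpotent a from ha) A.val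

section Annihilator

variable {D : Type*} [DivisionRing D] {n : ℕ}

/-- The left ideal of matrices whose action on column vectors vanishes on `K`. -/
def Matrix.annihilatorLeftIdeal (K : Submodule Dᵐᵒᵖ (Fin n → D)) :
    Submodule (Matrix (Fin n) (Fin n) D) (Matrix (Fin n) (Fin n) D) where
  carrier := {M | ∀ v ∈ K, M *ᵥ v = 0}
  add_mem' hM hN v hv := by rw [Matrix.add_mulVec, hM v hv, hN v hv, add_zero]
  zero_mem' v _ := Matrix.zero_mulVec v
  smul_mem' M N hN v hv := by
    rw [smul_eq_mul, ← Matrix.mulVec_mulVec, hN v hv, Matrix.mulVec_zero]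

theorem finrank_mulOpposite_fin_fun : Module.finrank Dᵐᵒᵖ (Fin n → D) = n := by
  rw [(LinearEquiv.piCongrRight fun _ : Fin n => MulOpposite.opLinearEquiv (M := D) Dᵐᵒᵖ).finrank_eq,
    Module.finrank_fin_fun]

instance finite_mulOpposite_fin_fun : Module.Finite Dᵐᵒᵖ (Fin n → D) :=
  Module.Finite.equiv
    (LinearEquiv.piCongrRight fun _ : Fin n => MulOpposite.opLinearEquiv (M := D) Dᵐᵒᵖ).symm

theorem Matrix.exists_mem_annihilatorLeftIdeal_not_isNilpotent
    {K : Submodule Dᵐᵒᵖ (Fin n → D)} (hK : K ≠ ⊤) :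
    ∃ p ∈ annihilatorLeftIdeal K, ¬ IsNilpotent p := by
  obtain ⟨φ, hφ, hKφ⟩ := K.exists_le_ker_of_lt_top hK.lt_top
  obtain ⟨u, hu⟩ : ∃ u, φ u ≠ 0 := by
    by_contra! h
    exact hφ (LinearMap.ext h)
  let v : Fin n → D := (φ u)⁻¹ • u
  have hv : φ v = 1 := by simp [v, hu]
  let p : Matrix (Fin n) (Fin n) D := .of fun i j => v i * (φ (Pi.single j 1)).unop
  have hp (w : Fin n → D) (i : Fin n) : (p *ᵥ w) i = v i * (φ w).unop := by
    have hw : w = ∑ j, MulOpposite.op (w j) • (Pi.single j 1 : Fin n → D) := by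
      ext i
      simp [Finset.sum_apply, Pi.single_apply]
    conv_rhs => rw [hw]
    simp [p, Matrix.mulVec, dotProduct, map_sum, Finset.mul_sum, mul_assoc]
  have hpv : p *ᵥ v = v := by
    ext i
    simp [hp, hv]
  refine ⟨p, fun w hw => ?_, ?_⟩
  · ext i
    simp [hp, LinearMap.mem_ker.mp (hKφ hw)]
  · rintro ⟨k, hk⟩
    have hpow (m : ℕ) : p ^ m *ᵥ v = v := by
      induction m with
      | zero => simp
      | succ m ih => rw [pow_succ, ← Matrix.mulVec_mulVec, hpv, ih]
    have hv0 : v = 0 := by rw [← hpow k, hk, Matrix.zero_mulVec]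
    rw [hv0, map_zero] at hv
    exact zero_ne_one hv

theorem Matrix.finrank_annihilatorLeftIdeal_le [Algebra ℚ D] [FiniteDimensional ℚ D]
    (K : Submodule Dᵐᵒᵖ (Fin n → D)) :
    Module.finrank ℚ ((annihilatorLeftIdeal K).restrictScalars ℚ) ≤
      n * (n - Module.finrank Dᵐᵒᵖ K) * Module.finrank ℚ D := by
  let m := Module.finrank Dᵐᵒᵖ ((Fin n → D) ⧸ K)
  have hm : n - Module.finrank Dᵐᵒᵖ K = m := by
    have := K.finrank_quotient_add_finrank
    rw [finrank_mulOpposite_fin_fun] at this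
    omega
  let b : Module.Basis (Fin m) Dᵐᵒᵖ ((Fin n → D) ⧸ K) := Module.finBasis _ _
  choose v hv using fun i => K.mkQ_surjective (b i)
  let F : (annihilatorLeftIdeal K).restrictScalars ℚ →ₗ[ℚ] (Fin m → Fin n → D) :=
    AddMonoidHom.toRatLinearMap <| AddMonoidHom.mk' (fun M i => M.1 *ᵥ v i) fun M N => by
      ext
      simp [Matrix.add_mulVec]
  have hF : Function.Injective F := by
    rw [injective_iff_map_eq_zero]
    rintro ⟨M, hM⟩ h0
    have h0' (i : Fin m) : M *ᵥ v i = 0 := congrFun h0 i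
    have hall (w : Fin n → D) : M *ᵥ w = 0 := by
      have hw : w - ∑ i, b.repr (K.mkQ w) i • v i ∈ K := by
        rw [← Submodule.Quotient.mk_eq_zero, ← K.mkQ_apply, map_sub, map_sum]
        simp only [map_smul, hv, b.sum_repr, sub_self]
      have h1 := hM _ hw
      rw [Matrix.mulVec_sub, sub_eq_zero] at h1
      rw [h1, Matrix.mulVec_sum]
      exact Finset.sum_eq_zero fun i _ => by rw [Matrix.mulVec_smul, h0', smul_zero]
    refine Subtype.ext (Matrix.ext fun i j => ?_)
    simpa using congrFun (hall (Pi.single j 1)) i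
  refine (LinearMap.finrank_le_finrank_of_injective hF).trans_eq ?_
  rw [hm, Module.finrank_pi_fintype]
  simp only [Module.finrank_pi_fintype, Finset.sum_const, Finset.card_univ, Fintype.card_fin,
    smul_eq_mul]
  ring

end Annihilator

/-- Let `D` be a division ring that is a finite-dimensional `ℚ`-algebra and `n ≥ 1`.  Let
`Σ` be a nontrivial finitely generated abelian subgroup of the group of invertible `n × n`
matrices over `D` consisting of unipotent matrices (here realised as the image of an
injective homomorphism `f` from a nontrivial finitely generated commutative group `H`).
Let `𝔨 = ⋂_{α ∈ Σ} ker(α - 1) ⊆ Dⁿ` (a right `D`-subspace, i.e. a `Dᵐᵒᵖ`-submodule) and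
`k = dim_D 𝔨`.  Then the `ℤ`-rank of `Σ`, i.e. `dim_ℚ (ℚ ⊗_ℤ Σ)`, is strictly less than
`n ⬝ (n - k) ⬝ dim_ℚ D`. -/
theorem rank_lt_of_unipotent_abelian_subgroup {D : Type*} [DivisionRing D] [Algebra ℚ D]
    [FiniteDimensional ℚ D] (n : ℕ) (hn : 1 ≤ n)
    (H : Type*) [CommGroup H] [Group.FG H] [Nontrivial H]
    (f : H →* (Matrix (Fin n) (Fin n) D)ˣ) (hf : Function.Injective f)
    (hunip : ∀ h : H, IsNilpotent ((f h).val - 1))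
    (K : Submodule Dᵐᵒᵖ (Fin n → D))
    (hK : (K : Set (Fin n → D)) =
      {v : Fin n → D | ∀ h : H, ((f h).val - 1) *ᵥ v = 0}) :
    Module.finrank ℚ (ℚ ⊗[ℤ] (Additive H)) <
      n * (n - Module.finrank Dᵐᵒᵖ K) * Module.finrank ℚ D := by
  have hmem (v : Fin n → D) : v ∈ K ↔ ∀ h : H, ((f h).val - 1) *ᵥ v = 0 := by
    rw [← SetLike.mem_coe, hK, Set.mem_ofPred_eq]
  have hKtop : K ≠ ⊤ := by
    rintro rfl
    obtain ⟨h, hh⟩ := exists_ne (1 : H)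
    refine hh (hf (Units.ext ?_))
    rw [map_one, Units.val_one, ← sub_eq_zero]
    ext i j
    simpa using congrFun ((hmem (Pi.single j 1)).mp trivial h) i
  obtain ⟨p, hpS, hp⟩ := Matrix.exists_mem_annihilatorLeftIdeal_not_isNilpotent hKtop
  exact (finrank_rat_tensor_lt_of_unipotent ((Units.coeHom _).comp f)
    (Units.val_injective.comp hf) hunip (Matrix.annihilatorLeftIdeal K)
    (fun h v hv => (hmem v).mp hv h) hpS hp).trans_le
    (Matrix.finrank_annihilatorLeftIdeal_le K)
end

section
/- Let R be a (unital, not necessarily commutative) ring whose additive group is finitely generated and torsion-free. Then for every a ∈ R there exists a positive integer κ such that a + κ·1 is left regular, i.e., the map R → R, x ↦ (a + κ·1)·x, is injective. -/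
/-- Let `R` be a unital ring whose additive group is finitely generated and torsion-free.
Then for every `a ∈ R` there is a positive integer `κ` such that `a + κ·1` is left
regular, i.e. left multiplication by `a + κ·1` is injective. -/
theorem exists_add_nat_leftRegular {R : Type*} [Ring R] [AddGroup.FG R]
    [NoZeroSMulDivisors ℤ R] (a : R) :
    ∃ κ : ℕ, 0 < κ ∧ Function.Injective (fun x : R => (a + (κ : R)) * x) := by
  have : Module.Finite ℤ R := Module.Finite.iff_addGroup_fg.mpr inferInstance
  have hfin := Module.End.finite_hasEigenvalue (LinearMap.mulLeft ℤ a)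
  have hinj : Function.Injective fun n : ℕ => -((n : ℤ) + 1) := fun m n h => by
    simpa using h
  obtain ⟨_, ⟨n, rfl⟩, hn⟩ := (Set.infinite_range_of_injective hinj).exists_notMem_finite hfin
  refine ⟨n + 1, n.succ_pos, fun x y hxy => ?_⟩
  by_contra hne
  have hmul : (a + ((n + 1 : ℕ) : R)) * (x - y) = 0 := by
    rw [mul_sub]
    exact sub_eq_zero.mpr hxy
  refine hn (Module.End.hasEigenvalue_of_hasEigenvector (x := x - y)
    ⟨Module.End.mem_eigenspace_iff.mpr ?_, sub_ne_zero.mpr hne⟩)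
  rw [add_mul] at hmul
  simpa [zsmul_eq_mul, -neg_add_rev] using eq_neg_of_add_eq_zero_left hmul
end

section
/- Let K be a number field with ring of integers R, and let I be a nonzero ideal of R. Call an element x ∈ R totally positive if φ(x) > 0 for every ring homomorphism (field embedding) φ : K → ℝ. Then the subring of R generated by the set of totally positive elements of 1 + I contains I. (Consequently, this subring has finite index in the additive group of R, i.e., it is an order in R.) -/
/-- Let `K` be a number field with ring of integers `R` and `I` a nonzero ideal of `R`.
Then the subring of `R` generated by the totally positive elements of `1 + I`
contains `I`. -/
theorem ideal_subset_subring_closure_totallyPositive {K : Type*} [Field K] [NumberField K]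
    (I : Ideal (NumberField.RingOfIntegers K)) (hI : I ≠ ⊥) :
    (I : Set (NumberField.RingOfIntegers K)) ⊆
      (Subring.closure {x : NumberField.RingOfIntegers K |
        (∃ a ∈ I, x = 1 + a) ∧
        ∀ φ : K →+* ℝ, 0 < φ (algebraMap (NumberField.RingOfIntegers K) K x)} :
        Set (NumberField.RingOfIntegers K)) := by
  intro a ha
  set N := Ideal.absNorm I
  have hNI : (N : NumberField.RingOfIntegers K) ∈ I := Ideal.absNorm_mem I
  have hN_pos : (1 : ℝ) ≤ N :=
    Nat.one_le_cast.2 (Nat.one_le_iff_ne_zero.2 (Ideal.absNorm_eq_zero_iff.not.2 hI))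
  obtain ⟨B, hB⟩ := (Set.finite_range fun φ : K →+* ℝ =>
    -φ (algebraMap (NumberField.RingOfIntegers K) K a)).bddAbove
  obtain ⟨k, hk⟩ := exists_nat_ge B
  have hkN : (k : ℝ) ≤ k * N := le_mul_of_one_le_right k.cast_nonneg hN_pos
  have hkNI : (k * N : NumberField.RingOfIntegers K) ∈ I := I.mul_mem_left _ hNI
  have ha_eq : a = (1 + (a + k * N)) - (1 + k * N) := by ring
  rw [ha_eq]
  refine Subring.sub_mem _
    (Subring.subset_closure ⟨⟨_, I.add_mem ha hkNI, rfl⟩, fun φ => ?_⟩)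
    (Subring.subset_closure ⟨⟨_, hkNI, rfl⟩, fun φ => ?_⟩)
  · have hφ : -φ (algebraMap (NumberField.RingOfIntegers K) K a) ≤ B := hB ⟨φ, rfl⟩
    simp only [map_add, map_mul, map_one, map_natCast]
    linarith
  · simp only [map_add, map_mul, map_one, map_natCast]
    positivity
end

section
/- Let V and W be finite-dimensional ℚ-vector spaces, let S and T be groups, and let σ : S → GL(V) and τ : T → GL(W) be group homomorphisms each satisfying the strong faithfulness condition (SF): for all s, s' ∈ S and all ρ ∈ GL(V), σ_s = ρ ∘ σ_{s'} ∘ ρ^{−1} implies s = s' (and the analogous condition for τ on W). Suppose there exist injective group homomorphisms 𝔱 : S → T and 𝔰 : T → S, and injective ℚ-linear maps 𝔟 : V → W and 𝔞 : W → V, such that 𝔟(σ_s(x)) = τ_{𝔱(s)}(𝔟(x)) for all s ∈ S, x ∈ V, and 𝔞(τ_t(y)) = σ_{𝔰(t)}(𝔞(y)) for all t ∈ T, y ∈ W. Then 𝔰 ∘ 𝔱 = id_S, 𝔱 ∘ 𝔰 = id_T, and 𝔟 and 𝔞 are bijective. -/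
/-- If an injective endomorphism intertwines `g` and `h` on a finite-dimensional space, then `h`
is conjugate to `g` in the general linear group. -/
theorem exists_units_conj_of_injective_intertwining {K V : Type*} [Field K] [AddCommGroup V]
    [Module K V] [FiniteDimensional K V] {g h : (Module.End K V)ˣ} (f : Module.End K V)
    (hf : Function.Injective f)
    (hfgh : ∀ x, f ((g : Module.End K V) x) = (h : Module.End K V) (f x)) :
    ∃ ρ : (Module.End K V)ˣ, h = ρ * g * ρ⁻¹ := by
  obtain ⟨ρ, rfl⟩ := (LinearMap.isUnit_iff_ker_eq_bot f).2 (LinearMap.ker_eq_bot.2 hf)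
  refine ⟨ρ, eq_mul_inv_of_mul_eq (Units.ext (LinearMap.ext fun x => ?_))⟩
  exact (hfgh x).symm

/-- Let `σ : S → GL(V)` and `τ : T → GL(W)` be representations on finite-dimensional
`ℚ`-vector spaces, each strongly faithful (conjugate images force equal group elements).
If there are injective group homomorphisms `𝔱 : S → T`, `𝔰 : T → S` and injective
equivariant `ℚ`-linear maps `𝔟 : V → W`, `𝔞 : W → V`, then `𝔰 ∘ 𝔱 = id`, `𝔱 ∘ 𝔰 = id`,
and `𝔟` and `𝔞` are bijective. -/
theorem strongly_faithful_mutual_embedding_rigidity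
    {V W : Type*} [AddCommGroup V] [Module ℚ V] [FiniteDimensional ℚ V]
    [AddCommGroup W] [Module ℚ W] [FiniteDimensional ℚ W]
    {S T : Type*} [Group S] [Group T]
    (σ : S →* (Module.End ℚ V)ˣ) (τ : T →* (Module.End ℚ W)ˣ)
    (hσSF : ∀ (s s' : S) (ρ : (Module.End ℚ V)ˣ), σ s = ρ * σ s' * ρ⁻¹ → s = s')
    (hτSF : ∀ (t t' : T) (ρ : (Module.End ℚ W)ˣ), τ t = ρ * τ t' * ρ⁻¹ → t = t')
    (𝔱 : S →* T) (h𝔱 : Function.Injective 𝔱)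
    (𝔰 : T →* S) (h𝔰 : Function.Injective 𝔰)
    (𝔟 : V →ₗ[ℚ] W) (h𝔟 : Function.Injective 𝔟)
    (𝔞 : W →ₗ[ℚ] V) (h𝔞 : Function.Injective 𝔞)
    (hb : ∀ (s : S) (x : V), 𝔟 ((σ s : Module.End ℚ V) x) = (τ (𝔱 s) : Module.End ℚ W) (𝔟 x))
    (ha : ∀ (t : T) (y : W), 𝔞 ((τ t : Module.End ℚ W) y) = (σ (𝔰 t) : Module.End ℚ V) (𝔞 y)) :
    (∀ s : S, 𝔰 (𝔱 s) = s) ∧ (∀ t : T, 𝔱 (𝔰 t) = t) ∧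
      Function.Bijective 𝔟 ∧ Function.Bijective 𝔞 := by
  have hdim : Module.finrank ℚ V = Module.finrank ℚ W :=
    (LinearMap.finrank_le_finrank_of_injective h𝔟).antisymm
      (LinearMap.finrank_le_finrank_of_injective h𝔞)
  refine ⟨fun s => ?_, fun t => ?_,
    ⟨h𝔟, (LinearMap.injective_iff_surjective_of_finrank_eq_finrank hdim).1 h𝔟⟩,
    ⟨h𝔞, (LinearMap.injective_iff_surjective_of_finrank_eq_finrank hdim.symm).1 h𝔞⟩⟩
  · obtain ⟨ρ, hρ⟩ := exists_units_conj_of_injective_intertwining (g := σ s) (h := σ (𝔰 (𝔱 s)))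
      (𝔞 ∘ₗ 𝔟) (h𝔞.comp h𝔟) fun x => by simp [hb, ha]
    exact hσSF _ _ ρ hρ
  · obtain ⟨ρ, hρ⟩ := exists_units_conj_of_injective_intertwining (g := τ t) (h := τ (𝔱 (𝔰 t)))
      (𝔟 ∘ₗ 𝔞) (h𝔟.comp h𝔞) fun x => by simp [hb, ha]
    exact hτSF _ _ ρ hρ
end
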